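/- (Instability of the proportional allocation equilibrium below capacity) Let E>0, g_l>0, flexible loads F = {1,…,n_F} (n_F ≥ 1), inflexible loads I = {n_F+1,…,n} nonempty with P_{0,j} > 0 for all j ∈ I, P_{0,i} ≥ 0 for i ∈ F, κ_i > 0 for i ∈ F with κ̄ = Σ_{i∈F} κ_i, b > 0, and 0 < a < E²/4. Suppose P̄₀ = Σᵢ P_{0,i} < P_max = E²·g_l/4, and let g* ∈ ℝⁿ be the proportional allocation equilibrium: g*ᵢ = (4/E²)·(P_{0,i} + (κᵢ/κ̄)·(P_max − P̄₀)) for i ∈ F and g*ᵢ = (4/E²)·P_{0,i} for i ∈ I (so Σᵢ g*ᵢ = g_l and v(g*) = E/2, and the coefficient c evaluates to c* = (P̄₀ − P_max)·v*²/(2·g_l) < 0). Then the VCS Jacobian J_SC(g*) has an eigenvalue with positive real part; i.e., in the underload regime the proportional allocation equilibrium is unstable. -/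

import Mathlib

/-- The VCS Jacobian `J_SC(g)` as a matrix on the index type
`(Fin nF ⊕ Fin nI) ⊕ (Unit ⊕ Fin nF)`: the first block indexes the load conductances
(flexible then inflexible), `Unit` indexes the shared state `φ`, and the last block the
controller states `ĝ`. Here `ḡ = Σⱼ gⱼ`, `v = E·g_l/(ḡ+g_l)`, `ΔP̄ = v²·ḡ − Σⱼ P₀ⱼ`, and
`c = (v²·(g_l−ḡ)/(ḡ+g_l))² + ΔP̄·2v²·(ḡ−2g_l)/(ḡ+g_l)²`. -/
noncomputable def JSC (E gl a b : ℝ) {nF nI : ℕ}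
    (P0 : Fin nF ⊕ Fin nI → ℝ) (κ : Fin nF → ℝ) (g : Fin nF ⊕ Fin nI → ℝ) :
    Matrix ((Fin nF ⊕ Fin nI) ⊕ (Unit ⊕ Fin nF))
           ((Fin nF ⊕ Fin nI) ⊕ (Unit ⊕ Fin nF)) ℝ :=
  let gbar : ℝ := ∑ j, g j
  let v : ℝ := E * gl / (gbar + gl)
  let c : ℝ := (v ^ 2 * (gl - gbar) / (gbar + gl)) ^ 2 +
    (v ^ 2 * gbar - ∑ j, P0 j) * (2 * v ^ 2 * (gbar - 2 * gl) / (gbar + gl) ^ 2)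
  fun p q =>
    match p, q with
    | Sum.inl i, Sum.inl j =>
        (2 * v ^ 2 / (gbar + gl)) * g i +
          (match i, j with
           | Sum.inl i', Sum.inl j' => if i' = j' then -(v ^ 2 + b) else 0
           | Sum.inr i', Sum.inr j' => if i' = j' then -(v ^ 2) else 0
           | _, _ => 0)
    | Sum.inl (Sum.inl i'), Sum.inr (Sum.inl _) => -κ i'
    | Sum.inl (Sum.inr _), Sum.inr (Sum.inl _) => 0
    | Sum.inl (Sum.inl i'), Sum.inr (Sum.inr j') => if i' = j' then b else 0
    | Sum.inl (Sum.inr _), Sum.inr (Sum.inr _) => 0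
    | Sum.inr (Sum.inl _), Sum.inl _ => c
    | Sum.inr (Sum.inl _), Sum.inr _ => 0
    | Sum.inr (Sum.inr i'), Sum.inl (Sum.inl j') => if i' = j' then a else 0
    | Sum.inr (Sum.inr _), Sum.inl (Sum.inr _) => 0
    | Sum.inr (Sum.inr i'), Sum.inr (Sum.inr j') => if i' = j' then -a else 0
    | Sum.inr (Sum.inr _), Sum.inr (Sum.inl _) => 0

/-!
The characteristic polynomial of a real matrix `A` is monic and takes the value
`det (-A)` at `0`, so `det (-A) < 0` forces a positive real eigenvalue. For the VCS Jacobian the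
determinant is explicit at every `g`, because row operations remove both the `b`-coupling to the
controller states (with the `ĝ`-rows) and the rank-one coupling through `ū` (with the `φ`-row,
which is itself a multiple of `ū`). What is left is
`det (-J_SC(g)) = c · κ̄ · a ^ n_F · (v²) ^ (n - 1)`, and `c < 0` below capacity.
-/

open Matrix

section RealEigenvalue

variable {m : Type*} [Fintype m] [DecidableEq m]

lemma exists_pos_mem_spectrum_of_det_neg_neg {A : Matrix m m ℝ} (hA : (-A).det < 0) :
    ∃ r ∈ spectrum ℝ A, 0 < r := by
  simp only [mem_spectrum_iff_isRoot_charpoly]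
  by_contra! hroots
  refine hA.not_ge ?_
  simpa [eval_charpoly] using A.charpoly.zero_le_eval_of_roots_le_of_leadingCoeff_nonneg hroots
    (by simp [A.charpoly_monic.leadingCoeff])

lemma map_mem_spectrum_map {K L : Type*} [Field K] [Field L] (f : K →+* L)
    {A : Matrix m m K} {r : K} (hr : r ∈ spectrum K A) : f r ∈ spectrum L (A.map f) := by
  rw [mem_spectrum_iff_isRoot_charpoly] at hr ⊢
  rw [charpoly_map]
  exact hr.map

end RealEigenvalue

section BlockDeterminants

variable {m n R K : Type*} [Fintype m] [DecidableEq m] [Fintype n] [DecidableEq n]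
  [CommRing R] [Field K]

lemma det_fromBlocks_add_mul_mul (A : Matrix m m R) (B X : Matrix m n R) (C : Matrix n m R)
    (D Y : Matrix n n R) :
    (fromBlocks (A + X * C) (B + X * D) (Y * C) (Y * D)).det =
      Y.det * (fromBlocks A B C D).det := by
  have hfactor : fromBlocks (A + X * C) (B + X * D) (Y * C) (Y * D) =
      fromBlocks 1 X 0 Y * fromBlocks A B C D := by
    simp [fromBlocks_multiply]
  rw [hfactor, det_mul, det_fromBlocks_zero₂₁, det_one, one_mul]

lemma det_fromBlocks_relaxation (M : Matrix m m R) (N : Matrix n m R) (X : Matrix m n R) (a : R) :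
    (fromBlocks (M + X * N) (-X) (-(a • N)) (a • 1)).det = a ^ Fintype.card n * M.det := by
  simpa [det_smul] using det_fromBlocks_add_mul_mul M 0 (-X) (-N) 1 (a • 1)

lemma det_fromBlocks_bordered_smul_one {w : K} (hw : w ≠ 0) (k y : m → K) :
    (fromBlocks (w • 1) (replicateCol Unit k) (replicateRow Unit y) 0).det =
      -(w ^ Fintype.card m * (y ⬝ᵥ k) / w) := by
  let _ : Invertible (w • 1 : Matrix m m K) := ⟨w⁻¹ • 1, by simp [hw], by simp [hw]⟩
  have hinv : ⅟(w • 1 : Matrix m m K) = w⁻¹ • 1 := rfl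
  simp [det_fromBlocks₁₁, hinv, det_unique, div_eq_mul_inv, mul_assoc, mul_comm w⁻¹]

lemma det_fromBlocks_integralFeedback {w : K} (hw : w ≠ 0) (x k y : m → K) (c : K) :
    (fromBlocks (w • 1 + vecMulVec x y) (replicateCol Unit k) (replicateRow Unit (c • y)) 0).det =
      -(c * w ^ Fintype.card m * (y ⬝ᵥ k) / w) := by
  have h := det_fromBlocks_add_mul_mul (w • 1) (replicateCol Unit k) (replicateCol Unit x)
    (replicateRow Unit y) 0 (c • 1)
  rw [det_fromBlocks_bordered_smul_one hw] at h
  simpa [vecMulVec_eq Unit, det_unique, mul_div_assoc, mul_assoc] using h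

end BlockDeterminants

section Jacobian

variable {F I ι : Type*} [Fintype F] [Fintype I] [Fintype ι]

/-- The load voltage `v = E·g_l/(ḡ+g_l)`. -/
noncomputable def loadVoltage (E gl : ℝ) (g : ι → ℝ) : ℝ :=
  E * gl / (∑ j, g j + gl)

/-- The coefficient `c` through which the total conductance drives the shared state `φ`. -/
noncomputable def phiGain (E gl : ℝ) (P0 g : ι → ℝ) : ℝ :=
  (loadVoltage E gl g ^ 2 * (gl - ∑ j, g j) / (∑ j, g j + gl)) ^ 2 +
    (loadVoltage E gl g ^ 2 * ∑ j, g j - ∑ j, P0 j) *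
      (2 * loadVoltage E gl g ^ 2 * (∑ j, g j - 2 * gl) / (∑ j, g j + gl) ^ 2)

/-- The proportional allocation equilibrium `g*`. -/
noncomputable def proportionalAllocation (E gl : ℝ) (P0 : F ⊕ I → ℝ) (κ : F → ℝ) : F ⊕ I → ℝ :=
  Sum.elim
    (fun i => (4 / E ^ 2) *
      (P0 (Sum.inl i) + (κ i / ∑ k, κ k) * (E ^ 2 * gl / 4 - ∑ j, P0 j)))
    (fun i => (4 / E ^ 2) * P0 (Sum.inr i))

lemma phiGain_of_sum_eq {E gl : ℝ} {P0 g : ι → ℝ} (hgl : gl ≠ 0) (hg : ∑ j, g j = gl) :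
    phiGain E gl P0 g = (∑ j, P0 j - E ^ 2 * gl / 4) * (E ^ 2 / (8 * gl)) := by
  simp only [phiGain, loadVoltage, hg]
  field_simp
  ring

lemma sum_proportionalAllocation {E gl : ℝ} {P0 : F ⊕ I → ℝ} {κ : F → ℝ} (hE : E ≠ 0)
    (hκ : ∑ k, κ k ≠ 0) : ∑ j, proportionalAllocation E gl P0 κ j = gl := by
  simp only [proportionalAllocation, Fintype.sum_sum_type, Sum.elim_inl, Sum.elim_inr,
    ← Finset.mul_sum, Finset.sum_add_distrib, ← Finset.sum_mul, ← Finset.sum_div, div_self hκ]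
  field_simp
  ring

variable [DecidableEq F] [DecidableEq I]

/-- Minus the Jacobian of the `(g, φ)`-dynamics in which every controller state is held at
`ĝᵢ = gᵢ`, so that the terms in `b` cancel. -/
noncomputable def negReducedJacobian (E gl : ℝ) (P0 : F ⊕ I → ℝ) (κ : F → ℝ) (g : F ⊕ I → ℝ) :
    Matrix ((F ⊕ I) ⊕ Unit) ((F ⊕ I) ⊕ Unit) ℝ :=
  fromBlocks
    (loadVoltage E gl g ^ 2 • 1 +
      vecMulVec (-(2 * loadVoltage E gl g ^ 2 / (∑ j, g j + gl)) • g) 1)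
    (replicateCol Unit (Sum.elim κ 0)) (replicateRow Unit (-phiGain E gl P0 g • 1)) 0

/-- The matrix extracting the flexible conductances from a state `(g, φ)`. -/
def flexibleProjection (F I : Type*) [DecidableEq F] : Matrix F ((F ⊕ I) ⊕ Unit) ℝ :=
  fromCols (fromCols 1 0) 0

lemma det_negReducedJacobian {E gl : ℝ} {P0 : F ⊕ I → ℝ} {κ : F → ℝ} {g : F ⊕ I → ℝ}
    (hv : loadVoltage E gl g ≠ 0) :
    (negReducedJacobian E gl P0 κ g).det =
      phiGain E gl P0 g * (loadVoltage E gl g ^ 2) ^ (Fintype.card F + Fintype.card I) *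
        (∑ k, κ k) / loadVoltage E gl g ^ 2 := by
  rw [negReducedJacobian, det_fromBlocks_integralFeedback (pow_ne_zero 2 hv)]
  simp [neg_div, one_dotProduct]

variable {nF nI : ℕ} {E gl a b : ℝ} {P0 : Fin nF ⊕ Fin nI → ℝ} {κ : Fin nF → ℝ}
  {g : Fin nF ⊕ Fin nI → ℝ}

lemma neg_JSC_submatrix_sumAssoc :
    (-JSC E gl a b P0 κ g).submatrix (Equiv.sumAssoc _ _ _) (Equiv.sumAssoc _ _ _) =
      fromBlocks
        (negReducedJacobian E gl P0 κ g +
          b • (flexibleProjection (Fin nF) (Fin nI))ᵀ * flexibleProjection (Fin nF) (Fin nI))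
        (-(b • (flexibleProjection (Fin nF) (Fin nI))ᵀ))
        (-(a • flexibleProjection (Fin nF) (Fin nI))) (a • 1) := by
  ext p q
  rw [submatrix_apply, neg_apply]
  rcases p with ((i | i) | i) | i <;> rcases q with ((j | j) | j) | j <;>
    simp only [JSC, negReducedJacobian, loadVoltage, phiGain, flexibleProjection,
      Equiv.sumAssoc_apply_inl_inl, Equiv.sumAssoc_apply_inl_inr, Equiv.sumAssoc_apply_inr,
      fromBlocks_apply₁₁, fromBlocks_apply₁₂, fromBlocks_apply₂₁, fromBlocks_apply₂₂,
      fromCols_apply_inl, fromCols_apply_inr, mul_fromCols, Matrix.mul_one, Matrix.mul_zero,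
      Matrix.add_apply, Matrix.neg_apply, Matrix.smul_apply, Matrix.zero_apply, one_apply,
      transpose_apply, vecMulVec_apply, replicateCol_apply, replicateRow_apply, Sum.elim_inl,
      Sum.elim_inr, Pi.smul_apply, Pi.one_apply, Pi.zero_apply, smul_eq_mul] <;>
    grind

theorem det_neg_JSC (hv : loadVoltage E gl g ≠ 0) :
    (-JSC E gl a b P0 κ g).det =
      a ^ nF * (phiGain E gl P0 g * (loadVoltage E gl g ^ 2) ^ (nF + nI) * (∑ k, κ k) /
        loadVoltage E gl g ^ 2) := by
  rw [← det_submatrix_equiv_self (Equiv.sumAssoc _ _ _), neg_JSC_submatrix_sumAssoc,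
    det_fromBlocks_relaxation, det_negReducedJacobian hv]
  simp only [Fintype.card_fin]

theorem exists_mem_spectrum_JSC_re_pos_of_phiGain_neg (ha : 0 < a) (hκ : 0 < ∑ k, κ k)
    (hv : loadVoltage E gl g ≠ 0) (hc : phiGain E gl P0 g < 0) :
    ∃ μ ∈ spectrum ℂ ((JSC E gl a b P0 κ g).map (Complex.ofReal : ℝ → ℂ)), 0 < μ.re := by
  have hdet : (-JSC E gl a b P0 κ g).det < 0 := by
    rw [det_neg_JSC hv]
    have hw : 0 < loadVoltage E gl g ^ 2 := by positivity
    exact mul_neg_of_pos_of_neg (pow_pos ha nF) <|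
      div_neg_of_neg_of_pos (mul_neg_of_neg_of_pos (mul_neg_of_neg_of_pos hc (pow_pos hw _)) hκ) hw
  obtain ⟨r, hr, hr_pos⟩ := exists_pos_mem_spectrum_of_det_neg_neg hdet
  exact ⟨r, map_mem_spectrum_map Complex.ofRealHom hr, hr_pos⟩

theorem stmt_16_general (hE : E ≠ 0) (hgl : 0 < gl) (ha : 0 < a) (hκ : 0 < ∑ k, κ k)
    (hunder : ∑ j, P0 j < E ^ 2 * gl / 4) (hg : ∑ j, g j = gl) :
    ∃ μ ∈ spectrum ℂ ((JSC E gl a b P0 κ g).map (Complex.ofReal : ℝ → ℂ)), 0 < μ.re := by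
  have hv : loadVoltage E gl g ≠ 0 := by
    rw [loadVoltage, hg]
    positivity
  have hc : phiGain E gl P0 g < 0 := by
    rw [phiGain_of_sum_eq hgl.ne' hg]
    exact mul_neg_of_neg_of_pos (sub_neg.2 hunder) (by positivity)
  exact exists_mem_spectrum_JSC_re_pos_of_phiGain_neg ha hκ hv hc

end Jacobian

/-- Instability of the proportional allocation equilibrium below capacity: when total demand
is strictly below the network capacity `E²·g_l/4` and `0 < a < E²/4`, the VCS Jacobian at
the proportional allocation equilibrium `g*` has an eigenvalue with positive real part,
i.e. in the underload regime the proportional allocation equilibrium is unstable. -/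
theorem stmt_16 (E gl a b : ℝ) (hE : 0 < E) (hgl : 0 < gl) (hb : 0 < b)
    (ha : 0 < a) (haE : a < E ^ 2 / 4)
    (nF nI : ℕ) (hnF : 1 ≤ nF) (hnI : 1 ≤ nI)
    (P0 : Fin nF ⊕ Fin nI → ℝ)
    (hP0F : ∀ i : Fin nF, 0 ≤ P0 (Sum.inl i))
    (hP0I : ∀ i : Fin nI, 0 < P0 (Sum.inr i))
    (κ : Fin nF → ℝ) (hκ : ∀ i, 0 < κ i)
    (hunder : (∑ j, P0 j) < E ^ 2 * gl / 4)
    (g : Fin nF ⊕ Fin nI → ℝ)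
    (hgdef : g = Sum.elim
      (fun i => (4 / E ^ 2) *
        (P0 (Sum.inl i) + (κ i / ∑ k, κ k) * (E ^ 2 * gl / 4 - ∑ j, P0 j)))
      (fun i => (4 / E ^ 2) * P0 (Sum.inr i))) :
    ∃ μ ∈ spectrum ℂ ((JSC E gl a b P0 κ g).map (Complex.ofReal : ℝ → ℂ)),
      0 < μ.re := by
  have hκ_sum : 0 < ∑ k, κ k := Finset.sum_pos (fun i _ => hκ i) ⟨⟨0, hnF⟩, Finset.mem_univ _⟩
  exact stmt_16_general hE.ne' hgl ha hκ_sum hunder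
    (hgdef ▸ sum_proportionalAllocation hE.ne' hκ_sum.ne')
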